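/- arXiv:1907.07926 — 3 statements merged into one kernel-verified Lean document; each statement's English description precedes it below -/
import Mathlib

section
/- Let 0 < μ < 2. Then D_4(u) > 0 for every u ∈ H¹(ℝ) with ‖u‖₂² = μ; consequently, since the infimum of D_4 over this constraint set is 0, no ground state of D_4 at mass μ exists. -/
open MeasureTheory Real Set

noncomputable section

/-- `u ∈ H¹(ℝ)` with weak derivative `u'`: `u` is continuous, square-integrable,
`u'` is square-integrable, and `u(b) − u(a) = ∫_a^b u'(t) dt` for all `a ≤ b`. -/
def IsH1 (u u' : ℝ → ℝ) : Prop :=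
  Continuous u ∧ Integrable (fun x => (u x) ^ 2) ∧ Integrable (fun x => (u' x) ^ 2) ∧
    ∀ a b : ℝ, a ≤ b → u b - u a = ∫ t in a..b, u' t

/-- The mass `‖u‖₂² = ∫_ℝ u(x)² dx`. -/
def mass (u : ℝ → ℝ) : ℝ := ∫ x, (u x) ^ 2

/-- `D_q(u) = (1/2)∫ u'² − (1/q)|u(0)|^q`. -/
def Dfun (q : ℝ) (u u' : ℝ → ℝ) : ℝ :=
  (1 / 2) * (∫ x, (u' x) ^ 2) - (1 / q) * |u 0| ^ q

/-- `F_{p,q}(u) = (1/2)∫ u'² − (1/p)∫ |u|^p − (1/q)|u(0)|^q`. -/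
def Ffun (p q : ℝ) (u u' : ℝ → ℝ) : ℝ :=
  (1 / 2) * (∫ x, (u' x) ^ 2) - (1 / p) * (∫ x, |u x| ^ p) - (1 / q) * |u 0| ^ q

/-!
Since `(u²)' = 2uu'` and `u²` is integrable, integrating from `x` to each of `±∞` gives
`u(x)² ≤ ∫ |uu'|`, and Cauchy–Schwarz turns this into the Gagliardo–Nirenberg inequality
`u(x)⁴ ≤ ‖u‖₂² ‖u'‖₂²`. Hence `D₄(u) ≥ (2 - ‖u‖₂²) / 4 · ‖u'‖₂²`, which is positive for `u ≠ 0`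
below mass `2`. The mass-preserving dilation `√l u(l ·)` multiplies `D₄` by `l²`, so `l < 1` lowers
any positive value of `D₄` and no minimizer exists.
-/

lemma le_of_forall_mem_le_add_norm {α E : Type*} [MeasurableSpace α] {μ : Measure α}
    [NormedAddCommGroup E] {f : α → E} (hf : Integrable f μ) {s : Set α} (hs : μ s = ⊤) {a b : ℝ}
    (h : ∀ y ∈ s, a ≤ b + ‖f y‖) : a ≤ b := by
  by_contra! hba
  have hsub : s ⊆ {y | a - b ≤ ‖f y‖} := fun y hy ↦ sub_le_iff_le_add'.2 (h y hy)
  exact ((measure_mono hsub).trans_lt (hf.measure_norm_ge_lt_top (sub_pos.2 hba))).ne hs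

lemma sq_integral_abs_mul_le {α : Type*} [MeasurableSpace α] {μ : Measure α} {f g : α → ℝ}
    (hf : MemLp f 2 μ) (hg : MemLp g 2 μ) :
    (∫ x, |f x * g x| ∂μ) ^ 2 ≤ (∫ x, f x ^ 2 ∂μ) * ∫ x, g x ^ 2 ∂μ := by
  have hf₀ : 0 ≤ ∫ x, f x ^ 2 ∂μ := integral_nonneg fun _ ↦ sq_nonneg _
  have hg₀ : 0 ≤ ∫ x, g x ^ 2 ∂μ := integral_nonneg fun _ ↦ sq_nonneg _
  have holder : ∫ x, |f x * g x| ∂μ ≤ √(∫ x, f x ^ 2 ∂μ) * √(∫ x, g x ^ 2 ∂μ) := by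
    have := integral_mul_norm_le_Lp_mul_Lq (E := ℝ) HolderConjugate.two_two
      (by rwa [ENNReal.ofReal_ofNat]) (by rwa [ENNReal.ofReal_ofNat]) (f := f) (g := g) (μ := μ)
    simpa only [norm_eq_abs, rpow_ofNat, sq_abs, ← abs_mul, ← sqrt_eq_rpow] using this
  calc (∫ x, |f x * g x| ∂μ) ^ 2
      ≤ (√(∫ x, f x ^ 2 ∂μ) * √(∫ x, g x ^ 2 ∂μ)) ^ 2 :=
        pow_le_pow_left₀ (integral_nonneg fun _ ↦ abs_nonneg _) holder 2
    _ = (∫ x, f x ^ 2 ∂μ) * ∫ x, g x ^ 2 ∂μ := by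
        rw [mul_pow, sq_sqrt hf₀, sq_sqrt hg₀]

lemma Dfun_four (u u' : ℝ → ℝ) : Dfun 4 u u' = 1 / 2 * (∫ x, u' x ^ 2) - 1 / 4 * u 0 ^ 4 := by
  rw [Dfun, rpow_ofNat, Even.pow_abs (by decide)]

namespace IsH1

variable {u u' : ℝ → ℝ}

lemma eq_zero_of_forall_eq (h : IsH1 u u') {c : ℝ} (hc : ∀ x, u x = c) : u = 0 := by
  have hint : Integrable fun _ : ℝ ↦ c ^ 2 := by simpa only [hc] using h.2.1
  obtain hc₀ | hfin := integrable_const_iff.1 hint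
  · exact funext fun x ↦ (hc x).trans (pow_eq_zero_iff two_ne_zero |>.1 hc₀)
  · exact absurd hfin.measure_univ_lt_top (by simp)

lemma eq_of_not_intervalIntegrable (h : IsH1 u u') {a b : ℝ} (hab : a ≤ b)
    (hu' : ¬IntervalIntegrable u' volume a b) : u a = u b := by
  have hftc := h.2.2.2 a b hab
  rw [intervalIntegral.integral_undef hu'] at hftc
  exact (sub_eq_zero.1 hftc).symm

lemma eq_zero_or_locallyIntegrable (h : IsH1 u u') : u = 0 ∨ LocallyIntegrable u' := by
  refine or_iff_not_imp_right.2 fun hloc ↦ ?_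
  obtain ⟨c, hc⟩ : ∃ c, ¬IntegrableAtFilter u' (nhds c) := by
    simpa only [LocallyIntegrable, not_forall] using hloc
  -- The integral of a non-integrable function is `0`, hence so is `u b - u a` whenever `a < c < b`.
  have across : ∀ a < c, ∀ b > c, u a = u b := fun a ha b hb ↦
    h.eq_of_not_intervalIntegrable (ha.trans hb).le fun hint ↦ hc
      ⟨Ioc a b, Ioc_mem_nhds ha hb,
        (intervalIntegrable_iff_integrableOn_Ioc_of_le (ha.trans hb).le).1 hint⟩
  have off : EqOn u (fun _ ↦ u (c + 1)) {c}ᶜ := fun x hx ↦ by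
    obtain hxc | hxc := lt_or_gt_of_ne hx
    · exact across x hxc (c + 1) (by linarith)
    · calc u x = u (c - 1) := (across (c - 1) (by linarith) x hxc).symm
        _ = u (c + 1) := across (c - 1) (by linarith) (c + 1) (by linarith)
  have hconst := h.1.ext_on (dense_compl_singleton c) continuous_const off
  exact h.eq_zero_of_forall_eq (congrFun hconst)

lemma eq_add_integral (h : IsH1 u u') (a x : ℝ) : u x = u a + ∫ t in a..x, u' t := by
  obtain hax | hxa := le_total a x
  · rw [← h.2.2.2 a x hax, add_sub_cancel]
  · rw [intervalIntegral.integral_symm, ← h.2.2.2 x a hxa, neg_sub, add_sub_cancel]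

lemma absolutelyContinuousOnInterval (h : IsH1 u u') (hu' : LocallyIntegrable u') (a b : ℝ) :
    AbsolutelyContinuousOnInterval u a b := by
  have hint : IntervalIntegrable u' volume a b := intervalIntegrable_iff.2 <|
    (hu'.integrableOn_isCompact isCompact_uIcc).mono_set uIoc_subset_uIcc
  have hconst : AbsolutelyContinuousOnInterval (fun _ ↦ u a) a b :=
    (LipschitzWith.const (u a)).lipschitzOnWith.absolutelyContinuousOnInterval
  rw [funext (h.eq_add_integral a)]
  exact hconst.add (hint.absolutelyContinuousOnInterval_intervalIntegral left_mem_uIcc)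

lemma deriv_ae_eq (h : IsH1 u u') (hu' : LocallyIntegrable u') : deriv u =ᵐ[volume] u' := by
  filter_upwards [LocallyIntegrable.ae_hasDerivAt_integral hu'] with x hx
  rw [funext (h.eq_add_integral 0)]
  exact ((hx 0).const_add (u 0)).deriv

lemma sq_sub_sq_eq_integral (h : IsH1 u u') (hu' : LocallyIntegrable u') (a b : ℝ) :
    u b ^ 2 - u a ^ 2 = ∫ t in a..b, 2 * (u t * u' t) := by
  have hac := h.absolutelyContinuousOnInterval hu' a b
  rw [sq, sq, ← hac.integral_deriv_mul_eq_sub hac]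
  refine intervalIntegral.integral_congr_ae ?_
  filter_upwards [h.deriv_ae_eq hu'] with t ht _
  rw [ht]
  ring

lemma memLp_two (h : IsH1 u u') : MemLp u 2 :=
  (memLp_two_iff_integrable_sq h.1.aestronglyMeasurable).2 h.2.1

lemma memLp_two_weakDeriv (h : IsH1 u u') (hu' : LocallyIntegrable u') : MemLp u' 2 :=
  (memLp_two_iff_integrable_sq hu'.aestronglyMeasurable).2 h.2.2.1

lemma integrable_abs_mul (h : IsH1 u u') (hu' : LocallyIntegrable u') :
    Integrable fun t ↦ |u t * u' t| :=
  (h.memLp_two.integrable_mul (h.memLp_two_weakDeriv hu')).abs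

lemma sq_le_two_mul_setIntegral (h : IsH1 u u') (hu' : LocallyIntegrable u') {s : Set ℝ} {x : ℝ}
    (hs : volume s = ⊤) (hsub : ∀ y ∈ s, uIoc x y ⊆ s) :
    u x ^ 2 ≤ 2 * ∫ t in s, |u t * u' t| := by
  refine le_of_forall_mem_le_add_norm h.2.1 hs fun y hy ↦ ?_
  have hdiff : |u y ^ 2 - u x ^ 2| ≤ 2 * ∫ t in s, |u t * u' t| :=
    calc |u y ^ 2 - u x ^ 2|
        ≤ ∫ t in uIoc x y, ‖2 * (u t * u' t)‖ := by
          rw [h.sq_sub_sq_eq_integral hu']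
          exact intervalIntegral.norm_integral_le_integral_norm_uIoc (E := ℝ)
      _ = 2 * ∫ t in uIoc x y, |u t * u' t| := by
          simp only [norm_mul, norm_eq_abs, abs_mul, abs_two, integral_const_mul]
      _ ≤ 2 * ∫ t in s, |u t * u' t| := by
          refine mul_le_mul_of_nonneg_left ?_ zero_le_two
          exact setIntegral_mono_set (h.integrable_abs_mul hu').integrableOn
            (ae_of_all _ fun _ ↦ abs_nonneg _) (hsub y hy).eventuallyLE
  rw [norm_eq_abs, abs_sq]
  linarith [neg_le_of_abs_le hdiff]

lemma sq_le_integral_abs_mul (h : IsH1 u u') (hu' : LocallyIntegrable u') (x : ℝ) :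
    u x ^ 2 ≤ ∫ t, |u t * u' t| := by
  have hint := h.integrable_abs_mul hu'
  have hleft : u x ^ 2 ≤ 2 * ∫ t in Iic x, |u t * u' t| :=
    h.sq_le_two_mul_setIntegral hu' volume_Iic fun y hy t ht ↦
      ht.2.trans (max_le le_rfl hy)
  have hright : u x ^ 2 ≤ 2 * ∫ t in Ioi x, |u t * u' t| :=
    h.sq_le_two_mul_setIntegral hu' volume_Ioi fun y hy t ht ↦
      (le_min le_rfl (le_of_lt hy)).trans_lt ht.1
  have hsplit := intervalIntegral.integral_Iic_add_Ioi (b := x) hint.integrableOn hint.integrableOn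
  linarith

lemma pow_four_le_mass_mul_integral (h : IsH1 u u') (x : ℝ) :
    u x ^ 4 ≤ mass u * ∫ t, u' t ^ 2 := by
  obtain rfl | hu' := h.eq_zero_or_locallyIntegrable
  · simp [mass]
  calc u x ^ 4 = (u x ^ 2) ^ 2 := by ring
    _ ≤ (∫ t, |u t * u' t|) ^ 2 := by
        gcongr
        exact h.sq_le_integral_abs_mul hu' x
    _ ≤ mass u * ∫ t, u' t ^ 2 :=
        sq_integral_abs_mul_le h.memLp_two (h.memLp_two_weakDeriv hu')

lemma integral_sq_weakDeriv_pos (h : IsH1 u u') (hu : u ≠ 0) : 0 < ∫ t, u' t ^ 2 := by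
  refine (integral_nonneg fun _ ↦ sq_nonneg _).lt_of_ne fun hzero ↦ hu (funext fun x ↦ ?_)
  have hx : u x ^ 4 ≤ 0 := by
    simpa only [← hzero, mul_zero] using h.pow_four_le_mass_mul_integral x
  exact eq_zero_of_pow_eq_zero (hx.antisymm (by positivity))

lemma mul_integral_le_Dfun_four (h : IsH1 u u') :
    (2 - mass u) / 4 * ∫ t, u' t ^ 2 ≤ Dfun 4 u u' := by
  rw [Dfun_four]
  linarith [h.pow_four_le_mass_mul_integral 0]

lemma Dfun_four_pos (h : IsH1 u u') (hu : u ≠ 0) (hmass : mass u < 2) : 0 < Dfun 4 u u' :=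
  (mul_pos (by linarith) (h.integral_sq_weakDeriv_pos hu)).trans_le h.mul_integral_le_Dfun_four

end IsH1

/-- The mass-preserving dilation `x ↦ √l u(lx)` of `u` by the factor `l`. -/
def dilate (l : ℝ) (u : ℝ → ℝ) (x : ℝ) : ℝ := √l * u (l * x)

section Dilation

variable {l : ℝ} {u u' : ℝ → ℝ}

lemma dilate_sq (hl : 0 ≤ l) (x : ℝ) : dilate l u x ^ 2 = l * u (l * x) ^ 2 := by
  rw [dilate, mul_pow, sq_sqrt hl]

lemma mass_dilate (hl : 0 < l) : mass (dilate l u) = mass u := by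
  simp only [mass, dilate_sq hl.le, integral_const_mul]
  rw [Measure.integral_comp_mul_left (fun x ↦ u x ^ 2), abs_of_pos (inv_pos.2 hl), smul_eq_mul,
    mul_inv_cancel_left₀ hl.ne']

lemma integrable_dilate_sq (hl : 0 < l) (hu : Integrable fun x ↦ u x ^ 2) :
    Integrable fun x ↦ dilate l u x ^ 2 := by
  simp only [dilate_sq hl.le]
  exact (hu.comp_mul_left' hl.ne').const_mul l

lemma isH1_dilate (h : IsH1 u u') (hl : 0 < l) :
    IsH1 (dilate l u) (fun x ↦ l * dilate l u' x) := by
  obtain ⟨hcont, hu, hu', hftc⟩ := h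
  refine ⟨?_, integrable_dilate_sq hl hu, ?_, fun a b hab ↦ ?_⟩
  · unfold dilate
    fun_prop
  · simp only [mul_pow]
    exact (integrable_dilate_sq hl hu').const_mul (l ^ 2)
  · simp only [dilate, intervalIntegral.integral_const_mul]
    rw [intervalIntegral.integral_comp_mul_left u' hl.ne',
      ← hftc (l * a) (l * b) (by gcongr), smul_eq_mul]
    field_simp

lemma Dfun_four_dilate (hl : 0 < l) :
    Dfun 4 (dilate l u) (fun x ↦ l * dilate l u' x) = l ^ 2 * Dfun 4 u u' := by
  have hkinetic : ∫ x, (l * dilate l u' x) ^ 2 = l ^ 2 * ∫ x, u' x ^ 2 := by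
    simp only [mul_pow, integral_const_mul]
    exact congrArg (l ^ 2 * ·) (mass_dilate hl)
  have hpoint : dilate l u 0 ^ 4 = l ^ 2 * u 0 ^ 4 := by
    calc dilate l u 0 ^ 4 = (dilate l u 0 ^ 2) ^ 2 := by ring
      _ = l ^ 2 * u 0 ^ 4 := by
        rw [dilate_sq hl.le, mul_zero]
        ring
  rw [Dfun_four, Dfun_four, hkinetic, hpoint]
  ring

end Dilation

theorem stmt3 (μ : ℝ) (hμ : 0 < μ) (hμ' : μ < 2) :
    (∀ u u' : ℝ → ℝ, IsH1 u u' → mass u = μ → 0 < Dfun 4 u u') ∧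
    ¬ (∃ u u' : ℝ → ℝ, IsH1 u u' ∧ mass u = μ ∧
        ∀ v v' : ℝ → ℝ, IsH1 v v' → mass v = μ → Dfun 4 u u' ≤ Dfun 4 v v') := by
  have hpos : ∀ u u' : ℝ → ℝ, IsH1 u u' → mass u = μ → 0 < Dfun 4 u u' := by
    rintro u u' h rfl
    refine h.Dfun_four_pos ?_ hμ'
    rintro rfl
    simp [mass] at hμ
  refine ⟨hpos, ?_⟩
  rintro ⟨u, u', h, hmass, hmin⟩
  have hhalf : (0 : ℝ) < 1 / 2 := one_half_pos
  have hle := hmin _ _ (isH1_dilate h hhalf) ((mass_dilate hhalf).trans hmass)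
  rw [Dfun_four_dilate hhalf] at hle
  linarith [hpos u u' h hmass]
end
end

section
/- Let μ > 2. Then D_4 is unbounded below on the mass-constraint set: for every M ∈ ℝ there exists u ∈ H¹(ℝ) with ‖u‖₂² = μ and D_4(u) < M. -/
open MeasureTheory Real Set

noncomputable section

/-! Under the mass-preserving dilation `u ↦ √k u(k ·)` both terms of `D_4` are multiplied by `k ^ 2`,
so a single function of negative energy drives `D_4` to `-∞` at fixed mass. The peakon
`√μ e^{-|x|}` has mass `μ` and energy `μ (2 - μ) / 4`, which is negative exactly when `μ > 2`. -/

theorem IsH1.of_hasDerivAt_off_countable {u u' : ℝ → ℝ} {s : Set ℝ} (hs : s.Countable)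
    (hcont : Continuous u) (hderiv : ∀ x ∉ s, HasDerivAt u (u' x) x)
    (hu : Integrable fun x => u x ^ 2) (hu' : Integrable fun x => u' x ^ 2) : IsH1 u u' := by
  have hae : deriv u =ᵐ[volume] u' := by
    filter_upwards [hs.ae_notMem volume] with x hx using (hderiv x hx).deriv
  have hmeas : AEStronglyMeasurable u' volume :=
    (aestronglyMeasurable_deriv u volume).congr hae
  have hloc : LocallyIntegrable u' :=
    ((memLp_two_iff_integrable_sq hmeas).mpr hu').locallyIntegrable one_le_two
  refine ⟨hcont, hu, hu', fun a b hab => ?_⟩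
  exact (integral_eq_of_hasDerivAt_off_countable_of_le u u' hab hs hcont.continuousOn
    (fun x hx => hderiv x hx.2)
    (hloc.integrableOn_isCompact isCompact_uIcc).intervalIntegrable).symm

section MassDilation

/-- The dilation `x ↦ √k u(k x)`, normalized so as to preserve the mass. Its weak derivative is
`k • massDilation k u'`. -/
def massDilation (k : ℝ) (u : ℝ → ℝ) : ℝ → ℝ := fun x => √k * u (k * x)

variable {k : ℝ} {u u' : ℝ → ℝ}

theorem massDilation_sq (hk : 0 ≤ k) (u : ℝ → ℝ) (x : ℝ) :
    massDilation k u x ^ 2 = k * u (k * x) ^ 2 := by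
  rw [massDilation, mul_pow, sq_sqrt hk]

theorem integrable_massDilation_sq (hk : 0 < k) (hu : Integrable fun x => u x ^ 2) :
    Integrable fun x => massDilation k u x ^ 2 := by
  simp_rw [massDilation_sq hk.le]
  exact (hu.comp_mul_left' hk.ne').const_mul k

theorem mass_massDilation (hk : 0 < k) (u : ℝ → ℝ) : mass (massDilation k u) = mass u := by
  simp_rw [mass, massDilation_sq hk.le]
  rw [integral_const_mul, Measure.integral_comp_mul_left (fun x => u x ^ 2) k,
    abs_of_pos (inv_pos.mpr hk), smul_eq_mul, mul_inv_cancel_left₀ hk.ne']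

theorem mass_const_smul (c : ℝ) (u : ℝ → ℝ) : mass (c • u) = c ^ 2 * mass u := by
  simp_rw [mass, Pi.smul_apply, smul_eq_mul, mul_pow]
  exact integral_const_mul _ _

theorem isH1_massDilation (hk : 0 < k) (hu : IsH1 u u') :
    IsH1 (massDilation k u) (k • massDilation k u') := by
  obtain ⟨hcont, husq, husq', hftc⟩ := hu
  refine ⟨by unfold massDilation; fun_prop, integrable_massDilation_sq hk husq, ?_, ?_⟩
  · simp_rw [Pi.smul_apply, smul_eq_mul, mul_pow]
    exact (integrable_massDilation_sq hk husq').const_mul (k ^ 2)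
  · intro a b hab
    calc √k * u (k * b) - √k * u (k * a)
        = √k * ∫ t in k * a..k * b, u' t := by
          rw [← mul_sub, hftc _ _ (mul_le_mul_of_nonneg_left hab hk.le)]
      _ = √k * (k * ∫ t in a..b, u' (k * t)) := by
          rw [intervalIntegral.mul_integral_comp_mul_left]
      _ = ∫ t in a..b, k * (√k * u' (k * t)) := by
          simp_rw [intervalIntegral.integral_const_mul]
          ring

theorem Dfun_massDilation (hk : 0 < k) (q : ℝ) (u u' : ℝ → ℝ) :
    Dfun q (massDilation k u) (k • massDilation k u') =
      k ^ 2 * (1 / 2 * ∫ x, u' x ^ 2) - k ^ (q / 2) * (1 / q * |u 0| ^ q) := by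
  have hkinetic : ∫ x, (k • massDilation k u') x ^ 2 = k ^ 2 * ∫ x, u' x ^ 2 :=
    (mass_const_smul k _).trans (congrArg (k ^ 2 * ·) (mass_massDilation hk u'))
  have hpoint : |massDilation k u 0| ^ q = k ^ (q / 2) * |u 0| ^ q := by
    rw [massDilation, mul_zero, abs_mul, abs_of_nonneg (sqrt_nonneg k),
      mul_rpow (sqrt_nonneg k) (abs_nonneg _), rpow_div_two_eq_sqrt q hk.le]
  rw [Dfun, hkinetic, hpoint]
  ring

theorem Dfun_four_massDilation (hk : 0 < k) (u u' : ℝ → ℝ) :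
    Dfun 4 (massDilation k u) (k • massDilation k u') = k ^ 2 * Dfun 4 u u' := by
  have hexp : k ^ ((4 : ℝ) / 2) = k ^ 2 := by
    rw [← rpow_natCast]
    norm_num
  rw [Dfun_massDilation hk, hexp, ← mul_sub, Dfun]

theorem IsH1.exists_mass_eq_Dfun_four_lt (hu : IsH1 u u') (hneg : Dfun 4 u u' < 0) (M : ℝ) :
    ∃ v v' : ℝ → ℝ, IsH1 v v' ∧ mass v = mass u ∧ Dfun 4 v v' < M := by
  have hlim : Filter.Tendsto (fun k : ℝ => k ^ 2 * Dfun 4 u u') Filter.atTop Filter.atBot :=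
    (Filter.tendsto_pow_atTop two_ne_zero).atTop_mul_const_of_neg hneg
  obtain ⟨k, hkM, hk⟩ :=
    ((hlim.eventually_lt_atBot M).and (Filter.eventually_gt_atTop 0)).exists
  refine ⟨massDilation k u, k • massDilation k u', isH1_massDilation hk hu,
    mass_massDilation hk u, ?_⟩
  rwa [Dfun_four_massDilation hk]

end MassDilation

section Peakon

theorem integral_exp_neg_mul_abs {c : ℝ} (hc : 0 < c) : ∫ x : ℝ, exp (-c * |x|) = 2 / c := by
  rw [integral_comp_abs (f := fun x => exp (-c * x)), integral_exp_mul_Ioi (neg_lt_zero.mpr hc),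
    mul_zero, exp_zero, neg_div_neg_eq, mul_one_div]

theorem integrable_exp_neg_mul_abs {c : ℝ} (hc : 0 < c) :
    Integrable fun x : ℝ => exp (-c * |x|) :=
  .of_integral_ne_zero <| by
    rw [integral_exp_neg_mul_abs hc]
    positivity

/-- The peakon `x ↦ a e^{-|x|}`, which has the least `∫ u'²` among the functions of `H¹(ℝ)` with
its mass and its value at the origin. It serves as a trial function of negative energy. -/
def peakon (a : ℝ) : ℝ → ℝ := fun x => a * exp (-|x|)

/-- The weak derivative of `peakon a`; its value at the corner `x = 0` is set to `0`. -/
def peakonDeriv (a : ℝ) : ℝ → ℝ := fun x => -SignType.sign x * peakon a x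

variable (a : ℝ)

theorem continuous_peakon : Continuous (peakon a) := by
  unfold peakon
  fun_prop

theorem hasDerivAt_peakon {x : ℝ} (hx : x ≠ 0) : HasDerivAt (peakon a) (peakonDeriv a x) x := by
  refine ((hasDerivAt_abs hx).fun_neg.exp.const_mul a).congr_deriv ?_
  rw [peakonDeriv, peakon]
  ring

theorem peakon_sq (x : ℝ) : peakon a x ^ 2 = a ^ 2 * exp (-2 * |x|) := by
  rw [peakon, mul_pow, ← exp_nat_mul]
  push_cast
  ring_nf

theorem peakonDeriv_sq_ae_eq :
    (fun x => peakonDeriv a x ^ 2) =ᵐ[volume] fun x => peakon a x ^ 2 := by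
  filter_upwards [Measure.ae_ne volume 0] with x hx
  rcases hx.lt_or_gt with hneg | hpos
  · simp [peakonDeriv, hneg]
  · simp [peakonDeriv, hpos]

theorem integrable_peakon_sq : Integrable fun x => peakon a x ^ 2 := by
  simp_rw [peakon_sq]
  exact (integrable_exp_neg_mul_abs two_pos).const_mul _

theorem isH1_peakon : IsH1 (peakon a) (peakonDeriv a) :=
  .of_hasDerivAt_off_countable (countable_singleton 0) (continuous_peakon a)
    (fun _ hx => hasDerivAt_peakon a hx) (integrable_peakon_sq a)
    ((integrable_peakon_sq a).congr (peakonDeriv_sq_ae_eq a).symm)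

theorem mass_peakon : mass (peakon a) = a ^ 2 := by
  simp_rw [mass, peakon_sq]
  rw [integral_const_mul, integral_exp_neg_mul_abs two_pos, div_self two_ne_zero, mul_one]

theorem Dfun_peakon (q : ℝ) :
    Dfun q (peakon a) (peakonDeriv a) = 1 / 2 * a ^ 2 - 1 / q * |a| ^ q := by
  have hkinetic : ∫ x, peakonDeriv a x ^ 2 = a ^ 2 :=
    (integral_congr_ae (peakonDeriv_sq_ae_eq a)).trans (mass_peakon a)
  have hpoint : peakon a 0 = a := by simp [peakon]
  rw [Dfun, hkinetic, hpoint]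

theorem Dfun_four_peakon : Dfun 4 (peakon a) (peakonDeriv a) = a ^ 2 * (2 - a ^ 2) / 4 := by
  rw [Dfun_peakon, rpow_ofNat, Even.pow_abs (by decide)]
  ring

end Peakon

theorem stmt5 (μ : ℝ) (hμ : 2 < μ) :
    ∀ M : ℝ, ∃ u u' : ℝ → ℝ, IsH1 u u' ∧ mass u = μ ∧ Dfun 4 u u' < M := by
  intro M
  have hsq : √μ ^ 2 = μ := sq_sqrt (by linarith)
  have hneg : Dfun 4 (peakon √μ) (peakonDeriv √μ) < 0 := by
    rw [Dfun_four_peakon, hsq]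
    nlinarith
  obtain ⟨u, u', hu, hmass, hlt⟩ := (isH1_peakon √μ).exists_mass_eq_Dfun_four_lt hneg M
  exact ⟨u, u', hu, hmass.trans ((mass_peakon √μ).trans hsq), hlt⟩
end
end

section
/- Let 2 < p < 6, 2 < q < 4 and μ > 0. Then F_{p,q} is bounded below and has negative infimum on the mass-constraint set: there exists C ∈ ℝ such that F_{p,q}(u) ≥ C for every u ∈ H¹(ℝ) with ‖u‖₂² = μ, and there exists u₀ ∈ H¹(ℝ) with ‖u₀‖₂² = μ and F_{p,q}(u₀) < 0. -/
open MeasureTheory Real Set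

noncomputable section

/-!
Lower bound: averaging the Hölder estimate `|u y - u x|² ≤ |y - x| ∫ u'²` over an interval
starting at `x`, and optimizing its length, gives the Gagliardo–Nirenberg inequality
`|u x|⁴ ≤ 16 ‖u‖₂² ‖u'‖₂²`. At fixed mass the two negative terms of `F` are therefore at most of
order `(∫ u'²) ^ ((p - 2) / 4)` and `(∫ u'²) ^ (q / 4)`; both exponents are below `1`, so the
kinetic term absorbs them.

Negativity: the profile `A exp (-l |x|)` has mass `μ` when `l = A² / μ`. Its kinetic term is then
`A⁴ / (2 μ)`, which the point term `A ^ q / q` beats for small `A` because `q < 4`.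
-/

theorem sq_integral_le_measureReal_mul_integral_sq {α : Type*} [MeasurableSpace α] {ν : Measure α}
    [IsFiniteMeasure ν] {f : α → ℝ} (hf : Integrable (fun x ↦ f x ^ 2) ν) :
    (∫ x, f x ∂ν) ^ 2 ≤ ν.real univ * ∫ x, f x ^ 2 ∂ν := by
  by_cases hfi : Integrable f ν
  · rcases eq_zero_or_neZero ν with rfl | _
    · simp
    have jensen : (⨍ x, f x ∂ν) ^ 2 ≤ ⨍ x, f x ^ 2 ∂ν :=
      even_two.convexOn_pow.map_average_le (continuous_pow 2).continuousOn isClosed_univ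
        (.of_forall fun _ ↦ mem_univ _) hfi hf
    calc (∫ x, f x ∂ν) ^ 2 = ν.real univ ^ 2 * (⨍ x, f x ∂ν) ^ 2 := by
          rw [← mul_pow, ← smul_eq_mul, measure_smul_average]
      _ ≤ ν.real univ ^ 2 * ⨍ x, f x ^ 2 ∂ν := by gcongr
      _ = ν.real univ * ∫ x, f x ^ 2 ∂ν := by
          rw [sq, mul_assoc, ← smul_eq_mul (ν.real univ) (⨍ x, f x ^ 2 ∂ν), measure_smul_average]
  · rw [integral_undef hfi, zero_pow two_ne_zero]
    positivity

theorem sq_intervalIntegral_le_mul_integral_sq {f : ℝ → ℝ} (hf : Integrable (fun x ↦ f x ^ 2))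
    {a b : ℝ} (hab : a ≤ b) : (∫ t in a..b, f t) ^ 2 ≤ (b - a) * ∫ x, f x ^ 2 := by
  calc (∫ t in a..b, f t) ^ 2 ≤ (b - a) * ∫ x in Ioc a b, f x ^ 2 := by
        simpa [intervalIntegral.integral_of_le hab, hab] using
          sq_integral_le_measureReal_mul_integral_sq (hf.integrableOn (s := Ioc a b))
    _ ≤ (b - a) * ∫ x, f x ^ 2 :=
        mul_le_mul_of_nonneg_left
          (setIntegral_le_integral hf (.of_forall fun _ ↦ sq_nonneg _)) (sub_nonneg.2 hab)

theorem exists_forall_mul_rpow_le_mul_add (A : ℝ) {r ε : ℝ} (hr : 0 ≤ r) (hr' : r < 1)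
    (hε : 0 < ε) : ∃ C, ∀ x, 0 ≤ x → A * x ^ r ≤ ε * x + C := by
  set B := (|A| / ε ^ r) ^ (1 - r)⁻¹
  have hB₀ : 0 ≤ B := by positivity
  have hB_rpow : B ^ (1 - r) = |A| / ε ^ r :=
    rpow_inv_rpow (by positivity) (sub_pos.2 hr').ne'
  refine ⟨B, fun x hx ↦ ?_⟩
  calc A * x ^ r ≤ |A| * x ^ r := by gcongr; exact le_abs_self A
    _ = (ε * x) ^ r * B ^ (1 - r) := by
        rw [hB_rpow, mul_rpow hε.le hx]
        field_simp
    _ ≤ r * (ε * x) + (1 - r) * B :=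
        geom_mean_le_arith_mean2_weighted hr (sub_nonneg.2 hr'.le) (by positivity) hB₀ (by ring)
    _ ≤ 1 * (ε * x) + 1 * B := by gcongr; linarith
    _ = ε * x + B := by ring

theorem exists_pos_rpow_lt_mul_rpow {a b c : ℝ} (hab : a < b) (hc : 0 < c) :
    ∃ s : ℝ, 0 < s ∧ s ^ b < c * s ^ a := by
  have hba : b - a ≠ 0 := (sub_pos.2 hab).ne'
  have hs : 0 < (c / 2) ^ (b - a)⁻¹ := by positivity
  refine ⟨(c / 2) ^ (b - a)⁻¹, hs, ?_⟩
  rw [← div_lt_iff₀ (rpow_pos_of_pos hs a), ← rpow_sub hs, rpow_inv_rpow (by positivity) hba]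
  exact half_lt_self hc

theorem mass_nonneg (u : ℝ → ℝ) : 0 ≤ mass u :=
  integral_nonneg fun _ ↦ sq_nonneg _

theorem Ffun_le_Dfun {p : ℝ} (hp : 0 ≤ p) (q : ℝ) (u u' : ℝ → ℝ) :
    Ffun p q u u' ≤ Dfun q u u' := by
  have h : 0 ≤ 1 / p * ∫ x, |u x| ^ p :=
    mul_nonneg (by positivity) (integral_nonneg fun _ ↦ by positivity)
  unfold Ffun Dfun
  linarith

namespace IsH1

variable {u u' : ℝ → ℝ}

theorem sq_sub_le (h : IsH1 u u') {x y : ℝ} (hxy : x ≤ y) :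
    (u y - u x) ^ 2 ≤ (y - x) * ∫ t, u' t ^ 2 := by
  obtain ⟨-, -, hu', hftc⟩ := h
  rw [hftc x y hxy]
  exact sq_intervalIntegral_le_mul_integral_sq hu' hxy

theorem mul_sq_le (h : IsH1 u u') (x : ℝ) {t : ℝ} (ht : 0 ≤ t) :
    t * u x ^ 2 ≤ 2 * mass u + 2 * t ^ 2 * ∫ y, u' y ^ 2 := by
  have hu := h.2.1
  set K := ∫ y, u' y ^ 2
  have hK : 0 ≤ K := integral_nonneg fun _ ↦ sq_nonneg _
  have hvol : volume.real (Ioc x (x + t)) = t := by simp [ht]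
  have hint : IntegrableOn (fun y ↦ 2 * u y ^ 2 + 2 * (t * K)) (Ioc x (x + t)) :=
    (hu.integrableOn.const_mul 2).add (integrable_const _)
  have pointwise : ∀ y ∈ Ioc x (x + t), u x ^ 2 ≤ 2 * u y ^ 2 + 2 * (t * K) := fun y hy ↦ by
    have hosc : (u y - u x) ^ 2 ≤ t * K :=
      (h.sq_sub_le hy.1.le).trans (mul_le_mul_of_nonneg_right (by linarith [hy.2]) hK)
    linarith [sq_nonneg (2 * u y - u x)]
  calc t * u x ^ 2 = ∫ _ in Ioc x (x + t), u x ^ 2 := by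
        rw [setIntegral_const, hvol, smul_eq_mul]
    _ ≤ ∫ y in Ioc x (x + t), (2 * u y ^ 2 + 2 * (t * K)) :=
        setIntegral_mono_on (integrable_const _) hint measurableSet_Ioc pointwise
    _ = 2 * (∫ y in Ioc x (x + t), u y ^ 2) + 2 * t ^ 2 * K := by
        rw [integral_add (hu.integrableOn.const_mul 2) (integrable_const _), integral_const_mul,
          setIntegral_const, hvol, smul_eq_mul]
        ring
    _ ≤ 2 * mass u + 2 * t ^ 2 * K := by
        gcongr
        exact setIntegral_le_integral hu (.of_forall fun _ ↦ sq_nonneg _)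

theorem pow_four_le (h : IsH1 u u') (x : ℝ) :
    u x ^ 4 ≤ 16 * mass u * ∫ y, u' y ^ 2 := by
  set K := ∫ y, u' y ^ 2
  have hK : 0 ≤ K := integral_nonneg fun _ ↦ sq_nonneg _
  have hquad (t : ℝ) : 0 ≤ 2 * K * (t * t) + -u x ^ 2 * t + 2 * mass u := by
    rcases le_total 0 t with ht | ht
    · linarith [h.mul_sq_le x ht]
    · have hlin : 0 ≤ -u x ^ 2 * t := mul_nonneg_of_nonpos_of_nonpos (by simp [sq_nonneg]) ht
      linarith [mul_nonneg hK (mul_self_nonneg t), mass_nonneg u]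
  have hdiscrim := discrim_le_zero hquad
  rw [discrim] at hdiscrim
  linarith

theorem abs_rpow_le (h : IsH1 u u') {r : ℝ} (hr : 0 ≤ r) (x : ℝ) :
    |u x| ^ r ≤ (16 * mass u * ∫ y, u' y ^ 2) ^ (r / 4) := by
  calc |u x| ^ r = (u x ^ 4) ^ (r / 4) := by
        rw [← Even.pow_abs (by decide), ← rpow_natCast_mul (abs_nonneg _)]
        congr 1
        push_cast
        ring
    _ ≤ (16 * mass u * ∫ y, u' y ^ 2) ^ (r / 4) :=
        rpow_le_rpow (by positivity) (h.pow_four_le x) (by positivity)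

theorem integral_abs_rpow_le (h : IsH1 u u') {p : ℝ} (hp : 2 ≤ p) :
    ∫ x, |u x| ^ p ≤ (16 * mass u * ∫ y, u' y ^ 2) ^ ((p - 2) / 4) * mass u := by
  rw [mass, ← integral_const_mul, ← mass]
  refine integral_mono_of_nonneg (.of_forall fun _ ↦ by positivity) (h.2.1.const_mul _)
    (.of_forall fun x ↦ ?_)
  calc |u x| ^ p = |u x| ^ (p - 2) * u x ^ 2 := by
        rw [← sq_abs (u x), ← rpow_natCast, ← rpow_add_of_nonneg (abs_nonneg _) (by linarith)
          (by norm_num)]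
        norm_num
    _ ≤ _ := mul_le_mul_of_nonneg_right (h.abs_rpow_le (by linarith) x) (sq_nonneg _)

theorem le_Ffun (h : IsH1 u u') {p q : ℝ} (hp : 2 ≤ p) (hq : 0 ≤ q) :
    1 / 2 * (∫ x, u' x ^ 2)
      - 1 / p * ((16 * mass u * ∫ x, u' x ^ 2) ^ ((p - 2) / 4) * mass u)
      - 1 / q * (16 * mass u * ∫ x, u' x ^ 2) ^ (q / 4) ≤ Ffun p q u u' := by
  unfold Ffun
  gcongr
  · exact h.integral_abs_rpow_le hp
  · exact h.abs_rpow_le hq 0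

end IsH1

theorem exists_forall_le_Ffun {p q : ℝ} (hp : 2 ≤ p) (hp' : p < 6) (hq : 0 ≤ q) (hq' : q < 4)
    (μ : ℝ) : ∃ C, ∀ u u' : ℝ → ℝ, IsH1 u u' → mass u = μ → C ≤ Ffun p q u u' := by
  obtain ⟨C₁, hC₁⟩ := exists_forall_mul_rpow_le_mul_add
    (1 / p * ((16 * μ) ^ ((p - 2) / 4) * μ)) (r := (p - 2) / 4) (ε := 1 / 4)
    (by linarith) (by linarith) (by norm_num)
  obtain ⟨C₂, hC₂⟩ := exists_forall_mul_rpow_le_mul_add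
    (1 / q * (16 * μ) ^ (q / 4)) (r := q / 4) (ε := 1 / 4)
    (by linarith) (by linarith) (by norm_num)
  refine ⟨-C₁ - C₂, fun u u' h hmass ↦ ?_⟩
  have hμ : 0 ≤ 16 * μ := by linarith [mass_nonneg u]
  have hK : 0 ≤ ∫ x, u' x ^ 2 := integral_nonneg fun _ ↦ sq_nonneg _
  have hF := h.le_Ffun hp hq
  rw [hmass, mul_rpow hμ hK, mul_rpow hμ hK] at hF
  linarith [hC₁ _ hK, hC₂ _ hK]

/-- The profile `A exp (-l |x|)`: the trial function showing that the infimum is negative. -/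
def expProfile (A l x : ℝ) : ℝ := A * exp (-l * |x|)

theorem continuous_expProfile (A l : ℝ) : Continuous (expProfile A l) := by
  unfold expProfile
  fun_prop

theorem hasDerivAt_expProfile (A l : ℝ) {x : ℝ} (hx : x ≠ 0) :
    HasDerivAt (expProfile A l) (-l * SignType.sign x * expProfile A l x) x := by
  refine ((((hasDerivAt_abs hx).const_mul (-l)).exp).const_mul A).congr_deriv ?_
  rw [expProfile]
  ring

theorem deriv_expProfile_sq_ae_eq (A l : ℝ) :
    (fun x ↦ deriv (expProfile A l) x ^ 2) =ᵐ[volume] fun x ↦ l ^ 2 * expProfile A l x ^ 2 := by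
  filter_upwards [Measure.ae_ne volume 0] with x hx
  rw [(hasDerivAt_expProfile A l hx).deriv]
  rcases hx.lt_or_gt with h | h <;> simp [h, mul_pow]

theorem integral_expProfile_sq (A : ℝ) {l : ℝ} (hl : 0 < l) :
    ∫ x, expProfile A l x ^ 2 = A ^ 2 / l := by
  have hsq (x : ℝ) : expProfile A l x ^ 2 = A ^ 2 * exp (-(2 * l) * |x|) := by
    rw [expProfile, mul_pow, ← exp_nat_mul]
    ring_nf
  simp_rw [hsq]
  rw [integral_const_mul, integral_comp_abs (f := fun x ↦ exp (-(2 * l) * x)),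
    integral_exp_mul_Ioi (by linarith), mul_zero, exp_zero]
  field_simp

theorem mass_expProfile (A : ℝ) {l : ℝ} (hl : 0 < l) : mass (expProfile A l) = A ^ 2 / l :=
  integral_expProfile_sq A hl

theorem isH1_expProfile {A l : ℝ} (hA : A ≠ 0) (hl : 0 < l) :
    IsH1 (expProfile A l) (deriv (expProfile A l)) := by
  have hsq : Integrable fun x ↦ expProfile A l x ^ 2 :=
    .of_integral_ne_zero (by rw [integral_expProfile_sq A hl]; positivity)
  have hsq' : Integrable fun x ↦ deriv (expProfile A l) x ^ 2 :=
    (hsq.const_mul (l ^ 2)).congr (deriv_expProfile_sq_ae_eq A l).symm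
  have hLp : MemLp (deriv (expProfile A l)) 2 :=
    (memLp_two_iff_integrable_sq (measurable_deriv _).aestronglyMeasurable).2 hsq'
  refine ⟨continuous_expProfile A l, hsq, hsq', fun a b hab ↦ ?_⟩
  refine (integral_eq_of_hasDerivAt_off_countable_of_le _ _ hab (countable_singleton 0)
    (continuous_expProfile A l).continuousOn (fun x hx ↦ ?_)
    ((hLp.locallyIntegrable one_le_two).integrableOn_isCompact isCompact_uIcc
      |>.intervalIntegrable)).symm
  exact (hasDerivAt_expProfile A l hx.2).differentiableAt.hasDerivAt

theorem Dfun_expProfile (q A : ℝ) {l : ℝ} (hl : 0 < l) :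
    Dfun q (expProfile A l) (deriv (expProfile A l)) = 1 / 2 * (A ^ 2 * l) - 1 / q * |A| ^ q := by
  have hkinetic : ∫ x, deriv (expProfile A l) x ^ 2 = A ^ 2 * l := by
    rw [integral_congr_ae (deriv_expProfile_sq_ae_eq A l), integral_const_mul,
      integral_expProfile_sq A hl]
    field_simp
  rw [Dfun, hkinetic, expProfile, abs_zero, mul_zero, exp_zero, mul_one]

theorem exists_Dfun_neg {q μ : ℝ} (hq : 0 < q) (hq' : q < 4) (hμ : 0 < μ) :
    ∃ u u' : ℝ → ℝ, IsH1 u u' ∧ mass u = μ ∧ Dfun q u u' < 0 := by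
  obtain ⟨A, hA, hlt⟩ := exists_pos_rpow_lt_mul_rpow hq' (show 0 < 2 * μ / q by positivity)
  have hl : 0 < A ^ 2 / μ := by positivity
  refine ⟨_, _, isH1_expProfile hA.ne' hl, ?_, ?_⟩
  · rw [mass_expProfile A hl]
    field_simp
  · rw [Dfun_expProfile q A hl, abs_of_pos hA, sub_neg]
    calc 1 / 2 * (A ^ 2 * (A ^ 2 / μ)) = 1 / (2 * μ) * A ^ (4 : ℝ) := by
          norm_cast
          field_simp
      _ < 1 / (2 * μ) * (2 * μ / q * A ^ q) := by gcongr
      _ = 1 / q * A ^ q := by field_simp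

theorem stmt6_general {p q μ : ℝ} (hp : 2 ≤ p) (hp' : p < 6) (hq : 0 < q) (hq' : q < 4)
    (hμ : 0 < μ) :
    (∃ C : ℝ, ∀ u u' : ℝ → ℝ, IsH1 u u' → mass u = μ → C ≤ Ffun p q u u') ∧
    (∃ u₀ u₀' : ℝ → ℝ, IsH1 u₀ u₀' ∧ mass u₀ = μ ∧ Ffun p q u₀ u₀' < 0) := by
  obtain ⟨u₀, u₀', hH1, hmass, hneg⟩ := exists_Dfun_neg hq hq' hμ
  exact ⟨exists_forall_le_Ffun hp hp' hq.le hq' μ,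
    u₀, u₀', hH1, hmass, (Ffun_le_Dfun (by linarith) q u₀ u₀').trans_lt hneg⟩

theorem stmt6 (p q μ : ℝ) (hp : 2 < p) (hp' : p < 6) (hq : 2 < q) (hq' : q < 4)
    (hμ : 0 < μ) :
    (∃ C : ℝ, ∀ u u' : ℝ → ℝ, IsH1 u u' → mass u = μ → C ≤ Ffun p q u u') ∧
    (∃ u₀ u₀' : ℝ → ℝ, IsH1 u₀ u₀' ∧ mass u₀ = μ ∧ Ffun p q u₀ u₀' < 0) :=
  stmt6_general hp.le hp' (by linarith) hq' hμ
end
end
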